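/- arXiv:2412.19889 — 2 statements merged into one kernel-verified Lean document; each statement's English description precedes it below -/
import Mathlib

section
/- Let n ≥ 1 and let a x : Fin n → ℝ satisfy |a j * x i| < 1 for all i, j. Then the family indexed by strictly decreasing tuples k : Fin n → ℕ, with term D(a, k) · D(x, k), has sum equal to (∏_{i<j} (a j - a i)) · (∏_{i<j} (x j - x i)) · ∏_{i,j} (1 - a i * x j)⁻¹. (This is the classical Cauchy identity Σ_λ s_λ(a) s_λ(x) = ∏_{i,j} 1/(1 − a_i x_j), written in determinant form via the bialternant formula, obtained from Theorem 1 with g(x) = 1/(1−x).) -/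
/-- A finite product of convergent real series is the sum, over all multi-indices, of the products
of their terms. -/
theorem hasSum_prod_pi_fin {β : Type*} {n : ℕ} {f : Fin n → β → ℝ} {s : Fin n → ℝ}
    (hf : ∀ i, HasSum (f i) (s i)) :
    HasSum (fun k : Fin n → β => ∏ i, f i (k i)) (∏ i, s i) := by
  induction n with
  | zero => simp
  | succ n ih =>
    have htail := ih fun i => hf i.succ
    have hsummable := summable_mul_of_summable_norm (f := f 0) (hf 0).summable.norm
      htail.summable.norm
    have hmul := (hf 0).mul htail hsummable
    rw [← (Fin.consEquiv fun _ => β).hasSum_iff, Fin.prod_univ_succ]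
    refine hmul.congr_fun fun p => ?_
    simp [Fin.prod_univ_succ, Fin.consEquiv]

/-- One step of Gaussian elimination on the matrix with entries `(1 - p * y)⁻¹`. -/
theorem inv_one_sub_mul_sub {K : Type*} [Field K] {p q y z : K} (hpy : 1 - p * y ≠ 0)
    (hpz : 1 - p * z ≠ 0) (hqy : 1 - q * y ≠ 0) :
    (1 - p * y)⁻¹ - (1 - q * z) * (1 - p * z)⁻¹ * (1 - q * y)⁻¹ =
      (p - q) * (1 - p * z)⁻¹ * ((y - z) * (1 - q * y)⁻¹ * (1 - p * y)⁻¹) := by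
  rw [mul_comm q y] at hqy ⊢
  field_simp
  ring

/-- The Cauchy determinant in the form `det (1 / (1 - a i * x j))`. -/
theorem det_inv_one_sub_mul {K : Type*} [Field K] {n : ℕ} (a x : Fin n → K)
    (hax : ∀ i j, 1 - a i * x j ≠ 0) :
    (Matrix.of fun i j => (1 - a i * x j)⁻¹).det =
      (∏ i, ∏ j ∈ Finset.Ioi i, (a j - a i)) * (∏ i, ∏ j ∈ Finset.Ioi i, (x j - x i)) *
        ∏ i, ∏ j, (1 - a i * x j)⁻¹ := by
  induction n with
  | zero => simp
  | succ n ih =>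
    let c : Fin (n + 1) → K :=
      Fin.cons 0 fun i => (1 - a 0 * x 0) * (1 - a i.succ * x 0)⁻¹
    let B : Matrix (Fin (n + 1)) (Fin (n + 1)) K :=
      Matrix.of fun i j => (1 - a i * x j)⁻¹ - c i * (1 - a 0 * x j)⁻¹
    have hdet : (Matrix.of fun i j => (1 - a i * x j)⁻¹).det = B.det :=
      Matrix.det_eq_of_forall_row_eq_smul_add_const c 0 rfl fun i j => by simp [B, c]
    have hcol : ∀ i : Fin n, B i.succ 0 = 0 := fun i => by
      have h₀ := hax 0 0
      simp only [B, c, Matrix.of_apply, Fin.cons_succ]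
      rw [mul_right_comm, mul_inv_cancel₀ h₀, one_mul, sub_self]
    have hminor : B.submatrix Fin.succ Fin.succ =
        Matrix.of fun i j => ((a i.succ - a 0) * (1 - a i.succ * x 0)⁻¹) *
          (Matrix.of fun i j : Fin n => ((x j.succ - x 0) * (1 - a 0 * x j.succ)⁻¹) *
            (Matrix.of fun i j : Fin n => (1 - a i.succ * x j.succ)⁻¹) i j) i j := by
      ext i j
      simp only [B, c, Matrix.of_apply, Matrix.submatrix_apply, Fin.cons_succ]
      exact inv_one_sub_mul_sub (hax _ _) (hax _ _) (hax _ _)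
    rw [hdet, Matrix.det_succ_column_zero, Fin.sum_univ_succ]
    simp only [hcol, mul_zero, zero_mul, Finset.sum_const_zero, add_zero, Fin.succAbove_zero,
      hminor, Matrix.det_mul_column, Matrix.det_mul_row]
    rw [ih (fun i => a i.succ) (fun j => x j.succ) fun i j => hax _ _]
    simp only [B, c, Matrix.of_apply, Fin.cons_zero, Fin.prod_univ_succ, Fin.prod_Ioi_succ,
      Fin.prod_Ioi_zero, Finset.prod_mul_distrib]
    simp
    ring

/-- A strictly decreasing tuple is determined by its composition with any permutation, and so is
the permutation. -/
theorem injective_strictAnti_comp_perm {α : Type*} [Preorder α] {n : ℕ} :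
    Function.Injective
      fun p : {k : Fin n → α // StrictAnti k} × Equiv.Perm (Fin n) => p.1.1 ∘ p.2 := by
  rintro ⟨⟨k, hk⟩, σ⟩ ⟨⟨l, hl⟩, τ⟩ h
  have h : k ∘ σ = l ∘ τ := h
  have hrange : Set.range (OrderDual.toDual ∘ k) = Set.range (OrderDual.toDual ∘ l) := by
    rw [← σ.surjective.range_comp, ← τ.surjective.range_comp (OrderDual.toDual ∘ l),
      Function.comp_assoc, h, Function.comp_assoc]
  obtain rfl : k = l := (StrictMono.range_inj hk.dual_right hl.dual_right).1 hrange
  obtain rfl : σ = τ := Equiv.ext fun i => hk.injective (congrFun h i)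
  rfl

/-- Every injective tuple is a permutation of a strictly decreasing one. -/
theorem exists_strictAnti_comp_perm_eq {α : Type*} [LinearOrder α] {n : ℕ} {k : Fin n → α}
    (hk : Function.Injective k) :
    ∃ (l : Fin n → α) (σ : Equiv.Perm (Fin n)), StrictAnti l ∧ l ∘ σ = k := by
  let τ : Equiv.Perm (Fin n) := Fin.revPerm.trans (Tuple.sort k)
  refine ⟨k ∘ τ, τ.symm, ?_, by ext; simp⟩
  have hanti : Antitone (k ∘ τ) := fun i j hij =>
    Tuple.monotone_sort k (Fin.rev_le_rev.2 hij)
  exact hanti.strictAnti_of_injective (hk.comp τ.injective)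

/-- A sum over all tuples of a function vanishing on non-injective tuples can be grouped by
decreasing rearrangement. -/
theorem HasSum.strictAnti_sum_perm {α : Type*} [LinearOrder α] {n : ℕ} {f : (Fin n → α) → ℝ}
    {s : ℝ} (hf : HasSum f s) (hzero : ∀ k, ¬ Function.Injective k → f k = 0) :
    HasSum (fun k : {k : Fin n → α // StrictAnti k} =>
      ∑ σ : Equiv.Perm (Fin n), f (k.1 ∘ σ)) s := by
  have hoff : ∀ k ∉ Set.range
      (fun p : {k : Fin n → α // StrictAnti k} × Equiv.Perm (Fin n) => p.1.1 ∘ p.2),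
      f k = 0 := fun k hk => hzero k fun hinj => by
    obtain ⟨l, σ, hl, rfl⟩ := exists_strictAnti_comp_perm_eq hinj
    exact hk ⟨(⟨l, hl⟩, σ), rfl⟩
  exact ((injective_strictAnti_comp_perm.hasSum_iff hoff).2 hf).prod_fiberwise
    fun k => hasSum_fintype _

/-- The series `∑ k, det (a i ^ k j) * ∏ i, x i ^ k i` over all tuples `k` expands the Cauchy
determinant. -/
theorem hasSum_det_pow_mul_prod_pow {n : ℕ} (a x : Fin n → ℝ)
    (hax : ∀ i j, |a i * x j| < 1) :
    HasSum (fun k : Fin n → ℕ => (Matrix.of fun i j => a i ^ k j).det * ∏ i, x i ^ k i)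
      (Matrix.of fun i j => (1 - a i * x j)⁻¹).det := by
  simp only [Matrix.det_apply', Matrix.of_apply, Finset.sum_mul, mul_assoc,
    ← Finset.prod_mul_distrib, ← mul_pow]
  exact hasSum_sum fun σ _ => (hasSum_prod_pi_fin fun i =>
    hasSum_geometric_of_abs_lt_one (hax (σ i) i)).mul_left _

theorem cauchy_identity_determinant_form
    (n : ℕ) (hn : 1 ≤ n) (a x : Fin n → ℝ)
    (hax : ∀ i j : Fin n, |a j * x i| < 1) :
    HasSum
      (fun k : {k : Fin n → ℕ // StrictAnti k} =>
        (Matrix.of fun i j : Fin n => (a i) ^ (k.1 j)).det *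
          (Matrix.of fun i j : Fin n => (x i) ^ (k.1 j)).det)
      ((∏ i : Fin n, ∏ j ∈ Finset.Ioi i, (a j - a i)) *
        (∏ i : Fin n, ∏ j ∈ Finset.Ioi i, (x j - x i)) *
        ∏ i : Fin n, ∏ j : Fin n, (1 - a i * x j)⁻¹) := by
  rw [← det_inv_one_sub_mul a x fun i j =>
    sub_ne_zero.2 ((le_abs_self _).trans_lt (hax j i)).ne']
  refine ((hasSum_det_pow_mul_prod_pow a x fun i j => hax j i).strictAnti_sum_perm
    fun k hk => ?_).congr_fun fun k => ?_
  · obtain ⟨i, j, hij, hne⟩ := Function.not_injective_iff.1 hk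
    rw [Matrix.det_zero_of_column_eq hne (by simp [hij]), zero_mul]
  · rw [← Matrix.det_transpose (Matrix.of fun i j : Fin n => x i ^ k.1 j),
      Matrix.det_apply' (Matrix.transpose _), Finset.mul_sum]
    refine Finset.sum_congr rfl fun σ _ => ?_
    have hperm := Matrix.det_permute' σ (Matrix.of fun i j : Fin n => a i ^ k.1 j)
    simp only [Matrix.submatrix, Matrix.of_apply, id] at hperm
    simp only [Function.comp_apply, Matrix.transpose_apply, Matrix.of_apply, hperm]
    ring
end

section
/- Let n ≥ 1 and let a x : Fin n → ℝ be arbitrary. Then the family indexed by strictly decreasing tuples k : Fin n → ℕ with every value k l odd, with term (∏_{l} ((-1)^((k l - 1)/2) / (k l)!)) · D(a, k) · D(x, k), has sum equal to the determinant of the n×n matrix with (i,j) entry Real.sin (a j * x i). (Determinant form of the sine example, from Theorem 1 with g(x) = sin x: the coefficient of x^k in sin x is (−1)^{(k−1)/2}/k! for odd k and 0 for even k.) -/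
/-- The reordering of a strictly decreasing tuple by a permutation of its indices. -/
def permuteStrictAnti (n : ℕ) (p : {k : Fin n → ℕ // StrictAnti k} × Equiv.Perm (Fin n)) :
    Fin n → ℕ :=
  p.1.1 ∘ p.2

theorem permuteStrictAnti_injective (n : ℕ) : Function.Injective (permuteStrictAnti n) := by
  rintro ⟨⟨k, hk⟩, σ⟩ ⟨⟨l, hl⟩, τ⟩ h
  change k ∘ σ = l ∘ τ at h
  have hkl : OrderDual.toDual ∘ k = OrderDual.toDual ∘ l := by
    refine (StrictMono.range_inj hk.dual_right hl.dual_right).1 ?_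
    have := congrArg Set.range h
    rw [Set.range_comp, Set.range_comp, σ.surjective.range_eq, τ.surjective.range_eq,
      Set.image_univ, Set.image_univ] at this
    rw [Set.range_comp, Set.range_comp, this]
  obtain rfl : k = l := hkl
  have : σ = τ := Equiv.ext fun i => hk.injective (congrFun h i)
  rw [this]

theorem mem_range_permuteStrictAnti {n : ℕ} {k : Fin n → ℕ} (hk : Function.Injective k) :
    k ∈ Set.range (permuteStrictAnti n) := by
  let σ := Tuple.sort (OrderDual.toDual ∘ k)
  have hanti : Antitone (k ∘ σ) := Tuple.monotone_sort (OrderDual.toDual ∘ k)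
  refine ⟨⟨⟨k ∘ σ, hanti.strictAnti_of_injective (hk.comp σ.injective)⟩, σ⁻¹⟩, ?_⟩
  funext i
  simp [permuteStrictAnti]

/-- The product of finitely many convergent real series, expanded as a series over tuples. -/
theorem hasSum_fin_prod {n : ℕ} {f : Fin n → ℕ → ℝ} {s : Fin n → ℝ}
    (h : ∀ i, HasSum (f i) (s i)) :
    HasSum (fun k : Fin n → ℕ => ∏ i, f i (k i)) (∏ i, s i) := by
  induction n with
  | zero => simp
  | succ n ih =>
    have ht := ih fun i => h i.succ
    have hsum : Summable fun p : ℕ × (Fin n → ℕ) => f 0 p.1 * ∏ i, f (Fin.succ i) (p.2 i) :=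
      summable_mul_of_summable_norm (f := f 0) (g := fun k : Fin n → ℕ => ∏ i, f (Fin.succ i) (k i))
        (h 0).summable.norm ht.summable.norm
    have hmul := (h 0).mul ht hsum
    rw [← (Fin.consEquiv fun _ : Fin (n + 1) => ℕ).hasSum_iff, Fin.prod_univ_succ]
    convert! hmul using 1
    funext k
    simp [Fin.prod_univ_succ]

/-- The Cauchy–Binet formula for a product of matrices with countably many inner indices. -/
theorem hasSum_det_mul_det {n : ℕ} {c : ℕ → ℝ} {u v : Fin n → ℕ → ℝ} {F : Fin n → Fin n → ℝ}
    (h : ∀ i j, HasSum (fun m => c m * u j m * v i m) (F i j)) :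
    HasSum
      (fun k : {k : Fin n → ℕ // StrictAnti k} =>
        (∏ l, c (k.1 l)) * (Matrix.of fun i j => u i (k.1 j)).det *
          (Matrix.of fun i j => v i (k.1 j)).det)
      (Matrix.of F).det := by
  have hall : HasSum
      (fun k : Fin n → ℕ => (∏ l, c (k l)) * (∏ l, u l (k l)) *
        (Matrix.of fun i j => v i (k j)).det) (Matrix.of F).det := by
    simp only [Matrix.det_apply, Finset.mul_sum, Matrix.of_apply]
    refine hasSum_sum fun σ _ => ?_
    convert! (hasSum_fin_prod fun i => h (σ i) i).const_smul (Equiv.Perm.sign σ) using 2 with k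
    rw [Finset.prod_mul_distrib, Finset.prod_mul_distrib, mul_smul_comm]
  rw [← (permuteStrictAnti_injective n).hasSum_iff] at hall
  · refine hall.prod_fiberwise fun k => ?_
    convert! hasSum_fintype _ using 1
    have hdet (τ : Equiv.Perm (Fin n)) : (Matrix.of fun i j => v i (k.1 (τ j))).det =
        Equiv.Perm.sign τ * (Matrix.of fun i j => v i (k.1 j)).det :=
      Matrix.det_permute' τ (Matrix.of fun i j => v i (k.1 j))
    rw [← Matrix.det_transpose (Matrix.of fun i j => u i (k.1 j)), Matrix.det_apply',
      Finset.mul_sum, Finset.sum_mul]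
    refine Finset.sum_congr rfl fun τ _ => ?_
    simp only [permuteStrictAnti, Function.comp_apply, Matrix.transpose_apply, Matrix.of_apply,
      hdet, Equiv.prod_comp τ fun l => c (k.1 l)]
    ring
  · intro k hk
    have hinj : ¬ Function.Injective k := fun hinj => hk (mem_range_permuteStrictAnti hinj)
    rw [Function.not_injective_iff] at hinj
    obtain ⟨i, j, hij, hne⟩ := hinj
    rw [Matrix.det_zero_of_column_eq hne (by simp [hij]), mul_zero]

/-- The `m`-th Taylor coefficient of `Real.sin` at zero. -/
noncomputable def sinCoeff (m : ℕ) : ℝ :=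
  if Odd m then (-1) ^ ((m - 1) / 2) / (Nat.factorial m : ℝ) else 0

theorem hasSum_sinCoeff (r : ℝ) : HasSum (fun m => sinCoeff m * r ^ m) (Real.sin r) := by
  have hinj : Function.Injective fun m : ℕ => 2 * m + 1 := fun i j h => by simpa using h
  rw [← hinj.hasSum_iff]
  · convert! Real.hasSum_sin r using 2 with m
    simp [sinCoeff, div_mul_eq_mul_div]
  · intro m hm
    have : ¬ Odd m := fun ⟨t, ht⟩ => hm ⟨t, ht.symm⟩
    simp [sinCoeff, this]

theorem cauchy_type_identity_sin
    (n : ℕ) (hn : 1 ≤ n) (a x : Fin n → ℝ) :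
    HasSum
      (fun k : {k : Fin n → ℕ // StrictAnti k ∧ ∀ l : Fin n, Odd (k l)} =>
        (∏ l : Fin n, ((-1 : ℝ) ^ ((k.1 l - 1) / 2) / (Nat.factorial (k.1 l) : ℝ))) *
          (Matrix.of fun i j : Fin n => (a i) ^ (k.1 j)).det *
          (Matrix.of fun i j : Fin n => (x i) ^ (k.1 j)).det)
      (Matrix.of fun i j : Fin n => Real.sin (a j * x i)).det := by
  have key := hasSum_det_mul_det (c := sinCoeff) (u := fun i m => a i ^ m)
    (v := fun i m => x i ^ m) (F := fun i j => Real.sin (a j * x i)) fun i j => by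
      simpa only [mul_pow, mul_assoc] using hasSum_sinCoeff (a j * x i)
  let ι (k : {k : Fin n → ℕ // StrictAnti k ∧ ∀ l : Fin n, Odd (k l)}) :
    {k : Fin n → ℕ // StrictAnti k} := ⟨k.1, k.2.1⟩
  have hι : Function.Injective ι := fun k l h => Subtype.ext (congrArg (fun m => m.1) h)
  rw [← hι.hasSum_iff] at key
  · convert! key using 2 with k
    have hprod : ∏ l, ((-1 : ℝ) ^ ((k.1 l - 1) / 2) / (Nat.factorial (k.1 l) : ℝ)) =
        ∏ l, sinCoeff (k.1 l) :=
      Finset.prod_congr rfl fun l _ => by simp [sinCoeff, k.2.2 l]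
    rw [hprod]
    rfl
  · intro k hk
    have : ∃ l, ¬ Odd (k.1 l) := by
      by_contra! hodd
      exact hk ⟨⟨k.1, k.2, hodd⟩, rfl⟩
    obtain ⟨l, hl⟩ := this
    rw [Finset.prod_eq_zero (Finset.mem_univ l) (by simp [sinCoeff, hl]), zero_mul, zero_mul]
end
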